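/- arXiv:2605.19691 — 5 statements merged into one kernel-verified Lean document; each statement's English description precedes it below -/
import Mathlib

section
/- Let K be a field and let B₁,…,B_k ∈ K^{m×n} be a linearly independent family of matrices generating a column-nondegenerate matrix rank-metric code C = span_K{B₁,…,B_k}. Then for every u ∈ K^k, the rank of the codeword m₁(T,u) = Σᵢ uᵢBᵢ satisfies rank(m₁(T,u)) = n − dim_K S_c(u^⊥), where S is the associated column-system and u^⊥ = {v ∈ K^k : Σᵢ uᵢvᵢ = 0}. -/
open Matrix

section Defs

variable {K : Type*} [Field K]

/-- The row space of a matrix: the span of its rows in `K^b`. -/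
noncomputable def rowSpace {a b : ℕ} (M : Matrix (Fin a) (Fin b) K) :
    Submodule K (Fin b → K) :=
  Submodule.span K (Set.range fun i => M i)

/-- The column space of a matrix: the span of its columns in `K^a`. -/
noncomputable def colSpace {a b : ℕ} (M : Matrix (Fin a) (Fin b) K) :
    Submodule K (Fin a → K) :=
  Submodule.span K (Set.range fun j i => M i j)

/-- `Sc S U = {X ∈ S : colsp(X) ⊆ U}`, a subspace of the matrix space. -/
noncomputable def Sc {a b : ℕ} (S : Submodule K (Matrix (Fin a) (Fin b) K))
    (U : Submodule K (Fin a → K)) : Submodule K (Matrix (Fin a) (Fin b) K) where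
  carrier := {X | X ∈ S ∧ colSpace X ≤ U}
  add_mem' := by
    rintro X Y ⟨hXS, hXU⟩ ⟨hYS, hYU⟩
    refine ⟨S.add_mem hXS hYS, ?_⟩
    rw [colSpace, Submodule.span_le]
    rintro v ⟨j, rfl⟩
    have hx : (fun i => X i j) ∈ U := hXU (Submodule.subset_span ⟨j, rfl⟩)
    have hy : (fun i => Y i j) ∈ U := hYU (Submodule.subset_span ⟨j, rfl⟩)
    exact U.add_mem hx hy
  zero_mem' := by
    refine ⟨S.zero_mem, ?_⟩
    rw [colSpace, Submodule.span_le]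
    rintro v ⟨j, rfl⟩
    exact U.zero_mem
  smul_mem' := by
    rintro c X ⟨hXS, hXU⟩
    refine ⟨S.smul_mem c hXS, ?_⟩
    rw [colSpace, Submodule.span_le]
    rintro v ⟨j, rfl⟩
    exact U.smul_mem c (hXU (Submodule.subset_span ⟨j, rfl⟩))

/-- `Sr S U = {X ∈ S : rowsp(X) ⊆ U}`, a subspace of the matrix space. -/
noncomputable def Sr {a b : ℕ} (S : Submodule K (Matrix (Fin a) (Fin b) K))
    (U : Submodule K (Fin b → K)) : Submodule K (Matrix (Fin a) (Fin b) K) where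
  carrier := {X | X ∈ S ∧ rowSpace X ≤ U}
  add_mem' := by
    rintro X Y ⟨hXS, hXU⟩ ⟨hYS, hYU⟩
    refine ⟨S.add_mem hXS hYS, ?_⟩
    rw [rowSpace, Submodule.span_le]
    rintro v ⟨i, rfl⟩
    have hx : X i ∈ U := hXU (Submodule.subset_span ⟨i, rfl⟩)
    have hy : Y i ∈ U := hYU (Submodule.subset_span ⟨i, rfl⟩)
    exact U.add_mem hx hy
  zero_mem' := by
    refine ⟨S.zero_mem, ?_⟩
    rw [rowSpace, Submodule.span_le]
    rintro v ⟨i, rfl⟩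
    exact U.zero_mem
  smul_mem' := by
    rintro c X ⟨hXS, hXU⟩
    refine ⟨S.smul_mem c hXS, ?_⟩
    rw [rowSpace, Submodule.span_le]
    rintro v ⟨i, rfl⟩
    exact U.smul_mem c (hXU (Submodule.subset_span ⟨i, rfl⟩))

/-- Row support of a set of matrices: the sum of the row spaces of its elements. -/
noncomputable def rowSupport {a b : ℕ} (D : Submodule K (Matrix (Fin a) (Fin b) K)) :
    Submodule K (Fin b → K) :=
  ⨆ M ∈ D, rowSpace M

/-- Column support of a set of matrices: the sum of the column spaces of its elements. -/
noncomputable def colSupport {a b : ℕ} (D : Submodule K (Matrix (Fin a) (Fin b) K)) :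
    Submodule K (Fin a → K) :=
  ⨆ M ∈ D, colSpace M

/-- The hyperplane `u^⊥ = {v : ∑ i, u i * v i = 0}`. -/
noncomputable def perp {a : ℕ} (u : Fin a → K) : Submodule K (Fin a → K) where
  carrier := {v | ∑ i, u i * v i = 0}
  add_mem' := by
    intro v w hv hw
    simp only [Set.mem_setOf_eq, Pi.add_apply, mul_add, Finset.sum_add_distrib] at *
    simp [hv, hw]
  zero_mem' := by simp
  smul_mem' := by
    intro c v hv
    simp only [Set.mem_setOf_eq, Pi.smul_apply, smul_eq_mul] at *
    have : ∑ i, u i * (c * v i) = c * ∑ i, u i * v i := by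
      rw [Finset.mul_sum]; congr 1; ext i; ring
    simp [this, hv]

/-- The orthogonal complement `U^⊥ = {v : ∀ u ∈ U, ∑ i, u i * v i = 0}`. -/
noncomputable def perpSub {a : ℕ} (U : Submodule K (Fin a → K)) : Submodule K (Fin a → K) :=
  ⨅ u ∈ U, perp u

/-- The slices of the column-system: `(X l) i j = (B i) j l`. -/
def colSlices {m n k : ℕ} (B : Fin k → Matrix (Fin m) (Fin n) K) :
    Fin n → Matrix (Fin k) (Fin m) K :=
  fun l => Matrix.of fun i j => B i j l

/-- The slices of the row-system: `(Y j) l i = (B i) j l`. -/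
def rowSlices {m n k : ℕ} (B : Fin k → Matrix (Fin m) (Fin n) K) :
    Fin m → Matrix (Fin n) (Fin k) K :=
  fun j => Matrix.of fun l i => B i j l

/-- The linear map `u ↦ ∑ i, u i • B i` (i.e. `u ↦ m₁(T,u)`). -/
noncomputable def combMap {m n k : ℕ} (B : Fin k → Matrix (Fin m) (Fin n) K) :
    (Fin k → K) →ₗ[K] Matrix (Fin m) (Fin n) K where
  toFun u := ∑ i, u i • B i
  map_add' := by intro u v; simp [add_smul, Finset.sum_add_distrib]
  map_smul' := by intro c u; simp [smul_smul, Finset.smul_sum]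

/-- The `t`-th row-generalized rank weight. -/
noncomputable def dRow {a b : ℕ} (C : Submodule K (Matrix (Fin a) (Fin b) K)) (t : ℕ) : ℕ :=
  sInf {r | ∃ D : Submodule K (Matrix (Fin a) (Fin b) K),
    D ≤ C ∧ Module.finrank K D = t ∧ Module.finrank K (rowSupport D) = r}

/-- The `t`-th column-generalized rank weight. -/
noncomputable def dCol {a b : ℕ} (C : Submodule K (Matrix (Fin a) (Fin b) K)) (t : ℕ) : ℕ :=
  sInf {r | ∃ D : Submodule K (Matrix (Fin a) (Fin b) K),
    D ≤ C ∧ Module.finrank K D = t ∧ Module.finrank K (colSupport D) = r}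

end Defs

/-! Consider the linear map `X ↦ u ᵥ* X` on the column-system `S`. It sends the slice `X l` to the
`l`-th column of the codeword `∑ i, u i • B i`, so its image is the column space of the codeword,
while its kernel on `S` is `Sc S (perp u)`. Rank-nullity therefore gives `rank + dim Sc = dim S`.
Finally, up to flattening, `S` and the row support of the code are the column space and the row
space of one matrix, an unfolding of the tensor `B`, hence have the same dimension; it is `n`
exactly when the code is column-nondegenerate. -/

section RankNullity

variable {K V W : Type*} [DivisionRing K] [AddCommGroup V] [Module K V] [AddCommGroup W]
  [Module K W]

theorem finrank_map_add_finrank_inf_ker (f : V →ₗ[K] W) (S : Submodule K V)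
    [FiniteDimensional K S] :
    Module.finrank K (S.map f) + Module.finrank K (S ⊓ LinearMap.ker f : Submodule K V) =
      Module.finrank K S := by
  have hker : (LinearMap.ker (f.domRestrict S)).map S.subtype = S ⊓ LinearMap.ker f := by
    rw [LinearMap.ker_domRestrict, Submodule.map_comap_subtype]
  rw [← hker, Submodule.finrank_map_subtype_eq, ← LinearMap.range_domRestrict,
    LinearMap.finrank_range_add_finrank_ker]

end RankNullity

section MatrixSpaces

variable {K : Type*} [Field K] {a b : ℕ}

theorem finrank_colSpace (M : Matrix (Fin a) (Fin b) K) :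
    Module.finrank K (colSpace M) = M.rank :=
  (rank_eq_finrank_span_cols M).symm

theorem colSpace_le_perp_iff (X : Matrix (Fin a) (Fin b) K) (u : Fin a → K) :
    colSpace X ≤ perp u ↔ u ᵥ* X = 0 := by
  rw [colSpace, Submodule.span_le, Set.range_subset_iff, funext_iff]
  rfl

theorem Sc_perp (S : Submodule K (Matrix (Fin a) (Fin b) K)) (u : Fin a → K) :
    Sc S (perp u) = S ⊓ LinearMap.ker (vecMulBilin K K u) :=
  Submodule.ext fun X => and_congr_right fun _ => colSpace_le_perp_iff X u

theorem rowSupport_le_iff (D : Submodule K (Matrix (Fin a) (Fin b) K))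
    (U : Submodule K (Fin b → K)) : rowSupport D ≤ U ↔ D ≤ Sr ⊤ U :=
  iSup₂_le_iff.trans <| forall₂_congr fun _ _ => (and_iff_right Submodule.mem_top).symm

end MatrixSpaces

/-- The unfolding of the tensor with slices `B i` that puts the matrices `B i` on top of each
other: its rows are the rows of all `B i`, its columns the flattened slices of the column-system. -/
def unfolding {K ι μ ν : Type*} (B : ι → Matrix μ ν K) : Matrix (ι × μ) ν K :=
  Matrix.of fun p => B p.1 p.2

section ColumnSystem

variable {K : Type*} [Field K] {m n k : ℕ}

theorem vecMul_colSlices (B : Fin k → Matrix (Fin m) (Fin n) K) (u : Fin k → K) (l : Fin n) :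
    u ᵥ* colSlices B l = (∑ i, u i • B i).col l := by
  ext j
  simp [vecMul, dotProduct, colSlices, Matrix.sum_apply]

theorem map_vecMulBilin_span_colSlices (B : Fin k → Matrix (Fin m) (Fin n) K)
    (u : Fin k → K) :
    (Submodule.span K (Set.range (colSlices B))).map (vecMulBilin K K u) =
      colSpace (∑ i, u i • B i) := by
  rw [Submodule.map_span, ← Set.range_comp]
  exact congrArg (Submodule.span K <| Set.range ·) (funext (vecMul_colSlices B u))

theorem rowSupport_span_range {ι : Type*} (B : ι → Matrix (Fin m) (Fin n) K) :
    rowSupport (Submodule.span K (Set.range B)) =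
      Submodule.span K (Set.range (unfolding B).row) := by
  refine eq_of_forall_ge_iff fun U => ?_
  have mem_Sr_iff (i : ι) : B i ∈ Sr ⊤ U ↔ ∀ j, B i j ∈ U := by
    change (B i ∈ ⊤ ∧ rowSpace (B i) ≤ U) ↔ _
    simp only [Submodule.mem_top, true_and, rowSpace, Submodule.span_le, Set.range_subset_iff,
      SetLike.mem_coe]
  simp only [rowSupport_le_iff, Submodule.span_le, Set.range_subset_iff, SetLike.mem_coe,
    mem_Sr_iff, Prod.forall]
  rfl

theorem finrank_span_colSlices_eq_rank_unfolding (B : Fin k → Matrix (Fin m) (Fin n) K) :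
    Module.finrank K (Submodule.span K (Set.range (colSlices B))) = (unfolding B).rank := by
  let flatten : Matrix (Fin k) (Fin m) K ≃ₗ[K] (Fin k × Fin m → K) :=
    (Matrix.ofLinearEquiv K).symm ≪≫ₗ (LinearEquiv.curry K K (Fin k) (Fin m)).symm
  have flatten_colSlices : flatten ∘ colSlices B = (unfolding B).col := rfl
  rw [rank_eq_finrank_span_cols, ← flatten_colSlices, Set.range_comp,
    ← LinearEquiv.coe_coe, ← Submodule.map_span, LinearEquiv.finrank_map_eq]

theorem finrank_rowSupport_eq_finrank_span_colSlices (B : Fin k → Matrix (Fin m) (Fin n) K) :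
    Module.finrank K (rowSupport (Submodule.span K (Set.range B))) =
      Module.finrank K (Submodule.span K (Set.range (colSlices B))) := by
  rw [rowSupport_span_range, ← rank_eq_finrank_span_row, finrank_span_colSlices_eq_rank_unfolding]

theorem stmt0_general (B : Fin k → Matrix (Fin m) (Fin n) K) (u : Fin k → K) :
    (∑ i, u i • B i).rank +
        Module.finrank K (Sc (Submodule.span K (Set.range (colSlices B))) (perp u)) =
      Module.finrank K (rowSupport (Submodule.span K (Set.range B))) := by
  rw [Sc_perp, ← finrank_colSpace, ← map_vecMulBilin_span_colSlices,
    finrank_map_add_finrank_inf_ker, finrank_rowSupport_eq_finrank_span_colSlices]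

end ColumnSystem

/-- For a column-nondegenerate matrix rank-metric code `C = span{B₁,…,B_k}`
with associated column-system `S`, the rank of the codeword `m₁(T,u) = ∑ i, uᵢ Bᵢ` equals
`n − dim S_c(u^⊥)`. -/
theorem stmt0 {K : Type*} [Field K] {m n k : ℕ}
    (hm : 0 < m) (hn : 0 < n) (hk : 0 < k)
    (B : Fin k → Matrix (Fin m) (Fin n) K) (hB : LinearIndependent K B)
    (C : Submodule K (Matrix (Fin m) (Fin n) K))
    (hC : C = Submodule.span K (Set.range B))
    (hnd : rowSupport C = ⊤)
    (S : Submodule K (Matrix (Fin k) (Fin m) K))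
    (hS : S = Submodule.span K (Set.range (colSlices B)))
    (u : Fin k → K) :
    (∑ i, u i • B i).rank = n - Module.finrank K (Sc S (perp u)) := by
  subst hC hS
  rw [Nat.eq_sub_of_add_eq (stmt0_general B u), hnd, finrank_top, Module.finrank_fin_fun]
end

section
/- Let F be a finite field with q elements and let B₁,…,B_k ∈ F^{m×n} be a linearly independent family of matrices generating a column-nondegenerate matrix rank-metric code C = span_F{B₁,…,B_k}, with associated column-system S. Then Σ_{M ∈ C, M ≠ 0} (q^{n−rank(M)} − 1) = Σ_{X ∈ S, X ≠ 0} (q^{k−rank(X)} − 1). -/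
open Matrix

/-!
Let `β(u, v) = (∑ i, u i • B i) *ᵥ v`. For fixed `u` this is the action of a codeword on `v`, and
for fixed `v` it is the action on `u` of the transpose of `∑ l, v l • X l`, where the `X l` are the
slices of the column-system. By rank-nullity each summand of the identity is the number of nonzero
vectors in the kernel of some `β(u, ·)` or `β(·, v)`. Since the `B i` are independent, and the `X l`
are independent by column-nondegeneracy, codewords and elements of the column-system correspond
bijectively to coefficient vectors `u` and `v`. Both sides therefore count the pairs `(u, v)` of
nonzero vectors with `β(u, v) = 0`.
-/

section Bilinear

variable {R U V W : Type*}

theorem finsum_mem_linearMap_range_diff_zero {A : Type*} [Semiring R] [AddCommMonoid U]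
    [AddCommMonoid V] [Module R U] [Module R V] [AddCommMonoid A] [Fintype U] [DecidableEq U]
    {f : U →ₗ[R] V} (hf : Function.Injective f) (g : V → A) :
    ∑ᶠ x ∈ (LinearMap.range f : Set V) \ {0}, g x = ∑ u ∈ {0}ᶜ, g (f u) := by
  have himage : (LinearMap.range f : Set V) \ {0} = f '' (({0}ᶜ : Finset U) : Set U) := by
    rw [LinearMap.coe_range, Finset.coe_compl, Finset.coe_singleton,
      Set.image_compl_eq_range_sdiff_image hf, Set.image_singleton, map_zero]
  rw [himage, finsum_mem_image hf.injOn, finsum_mem_coe_finset]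

theorem natCard_ker_sub_one_eq_card_filter [Semiring R] [AddCommMonoid U] [AddCommMonoid V]
    [Module R U] [Module R V] [Fintype U] [DecidableEq U] [DecidableEq V] (f : U →ₗ[R] V) :
    (Nat.card (LinearMap.ker f) : ℤ) - 1 = (({0}ᶜ : Finset U).filter fun u => f u = 0).card := by
  have hker : Nat.card (LinearMap.ker f) = (Finset.univ.filter fun u => f u = 0).card := by
    rw [← Fintype.card_subtype, ← Nat.card_eq_fintype_card]
    rfl
  have hzero : (0 : U) ∈ Finset.univ.filter fun u => f u = 0 := by simp
  rw [hker, Finset.compl_singleton, Finset.filter_erase, sub_eq_iff_eq_add]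
  exact_mod_cast (Finset.card_erase_add_one hzero).symm

theorem sum_natCard_ker_sub_one_eq_sum_flip [CommSemiring R] [AddCommMonoid U] [AddCommMonoid V]
    [AddCommMonoid W] [Module R U] [Module R V] [Module R W] [Fintype U] [DecidableEq U]
    [Fintype V] [DecidableEq V] (β : U →ₗ[R] V →ₗ[R] W) :
    ∑ u ∈ {0}ᶜ, ((Nat.card (LinearMap.ker (β u)) : ℤ) - 1)
      = ∑ v ∈ {0}ᶜ, ((Nat.card (LinearMap.ker (β.flip v)) : ℤ) - 1) := by
  classical
  simp only [natCard_ker_sub_one_eq_card_filter, LinearMap.flip_apply]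
  exact_mod_cast Finset.sum_card_bipartiteAbove_eq_sum_card_bipartiteBelow fun u v => β u v = 0

end Bilinear

theorem natCard_ker_mulVecLin {K m n : Type*} [Field K] [Fintype n] (M : Matrix m n K) :
    Nat.card (LinearMap.ker M.mulVecLin) = Nat.card K ^ (Fintype.card n - M.rank) := by
  have hdim : M.rank + Module.finrank K (LinearMap.ker M.mulVecLin) = Fintype.card n := by
    rw [Matrix.rank, LinearMap.finrank_range_add_finrank_ker, Module.finrank_fintype_fun_eq_card]
  rw [Module.natCard_eq_pow_finrank (K := K), ← hdim, Nat.add_sub_cancel_left]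

section ColumnSystem

variable {K : Type*} [Field K] {m n k : ℕ}

theorem range_combMap (B : Fin k → Matrix (Fin m) (Fin n) K) :
    LinearMap.range (combMap B) = Submodule.span K (Set.range B) :=
  Fintype.range_linearCombination K B

theorem combMap_injective_iff {B : Fin k → Matrix (Fin m) (Fin n) K} :
    Function.Injective (combMap B) ↔ LinearIndependent K B :=
  linearIndependent_iff_injective_fintypeLinearCombination.symm

theorem combMap_apply (B : Fin k → Matrix (Fin m) (Fin n) K) (u : Fin k → K) (j : Fin m)
    (l : Fin n) : combMap B u j l = ∑ i, u i * B i j l := by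
  simp [combMap, Matrix.sum_apply]

theorem combMap_mulVec (B : Fin k → Matrix (Fin m) (Fin n) K) (u : Fin k → K) (v : Fin n → K) :
    combMap B u *ᵥ v = (combMap (colSlices B) v)ᵀ *ᵥ u := by
  ext j
  simp only [Matrix.mulVec, dotProduct, Matrix.transpose_apply, combMap_apply, colSlices,
    Matrix.of_apply, Finset.sum_mul]
  rw [Finset.sum_comm]
  exact Finset.sum_congr rfl fun i _ => Finset.sum_congr rfl fun l _ => by ring

/-- The bilinear map `(u, v) ↦ (∑ i, u i • B i) *ᵥ v`, that is, the contraction of the tensor with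
slices `B i` along its first and third axes. Its partial maps are the codewords on one side and the
transposed elements of the column-system on the other. -/
noncomputable def evalPairing (B : Fin k → Matrix (Fin m) (Fin n) K) :
    (Fin k → K) →ₗ[K] (Fin n → K) →ₗ[K] Fin m → K :=
  Matrix.mulVecBilin K K ∘ₗ combMap B

theorem natCard_ker_evalPairing (B : Fin k → Matrix (Fin m) (Fin n) K) (u : Fin k → K) :
    Nat.card (LinearMap.ker (evalPairing B u)) = Nat.card K ^ (n - (combMap B u).rank) := by
  have heval : evalPairing B u = (combMap B u).mulVecLin := rfl
  rw [heval, natCard_ker_mulVecLin, Fintype.card_fin]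

theorem natCard_ker_flip_evalPairing (B : Fin k → Matrix (Fin m) (Fin n) K) (v : Fin n → K) :
    Nat.card (LinearMap.ker ((evalPairing B).flip v))
      = Nat.card K ^ (k - (combMap (colSlices B) v).rank) := by
  have hflip : (evalPairing B).flip v = ((combMap (colSlices B) v)ᵀ).mulVecLin :=
    LinearMap.ext fun u => combMap_mulVec B u v
  rw [hflip, natCard_ker_mulVecLin, Matrix.rank_transpose, Fintype.card_fin]

theorem mem_perp {u v : Fin n → K} : v ∈ perp u ↔ u ⬝ᵥ v = 0 :=
  Iff.rfl

theorem perp_eq_top_iff {u : Fin n → K} : perp u = ⊤ ↔ u = 0 := by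
  simp only [Submodule.eq_top_iff', mem_perp, dotProduct_eq_zero_iff]

theorem rowSpace_le_perp_iff {M : Matrix (Fin m) (Fin n) K} {v : Fin n → K} :
    rowSpace M ≤ perp v ↔ M *ᵥ v = 0 := by
  rw [rowSpace, Submodule.span_le, Set.range_subset_iff, funext_iff]
  simp only [SetLike.mem_coe, mem_perp, Matrix.mulVec, dotProduct_comm v, Pi.zero_apply]

theorem rowSupport_le_perp_iff {D : Submodule K (Matrix (Fin m) (Fin n) K)} {v : Fin n → K} :
    rowSupport D ≤ perp v ↔ ∀ M ∈ D, M *ᵥ v = 0 := by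
  simp only [rowSupport, iSup_le_iff, rowSpace_le_perp_iff]

theorem combMap_colSlices_eq_zero_iff {B : Fin k → Matrix (Fin m) (Fin n) K} {v : Fin n → K} :
    combMap (colSlices B) v = 0 ↔ rowSupport (Submodule.span K (Set.range B)) ≤ perp v := by
  calc combMap (colSlices B) v = 0
      ↔ ∀ u, (combMap (colSlices B) v)ᵀ *ᵥ u = 0 := by
        rw [← Matrix.transpose_eq_zero, ← Matrix.mulVec_injective.eq_iff, funext_iff]
        simp only [Matrix.zero_mulVec]
    _ ↔ rowSupport (Submodule.span K (Set.range B)) ≤ perp v := by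
        rw [rowSupport_le_perp_iff, ← range_combMap]
        simp only [LinearMap.mem_range, forall_exists_index, forall_apply_eq_imp_iff,
          combMap_mulVec]

theorem linearIndependent_colSlices {B : Fin k → Matrix (Fin m) (Fin n) K}
    (hB : rowSupport (Submodule.span K (Set.range B)) = ⊤) :
    LinearIndependent K (colSlices B) := by
  rw [← combMap_injective_iff, ← LinearMap.ker_eq_bot, LinearMap.ker_eq_bot']
  intro v hv
  rwa [combMap_colSlices_eq_zero_iff, hB, top_le_iff, perp_eq_top_iff] at hv

end ColumnSystem

/-- Delsarte-type identity: for a column-nondegenerate `[m×n,k]_q` code `C`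
with associated column-system `S`,
`Σ_{M ∈ C, M ≠ 0} (q^{n−rk(M)} − 1) = Σ_{X ∈ S, X ≠ 0} (q^{k−rk(X)} − 1)`. -/
theorem stmt2 {F : Type*} [Field F] [Fintype F] {m n k : ℕ}
    (hm : 0 < m) (hn : 0 < n) (hk : 0 < k)
    (q : ℕ) (hq : q = Fintype.card F)
    (B : Fin k → Matrix (Fin m) (Fin n) F) (hB : LinearIndependent F B)
    (C : Submodule F (Matrix (Fin m) (Fin n) F))
    (hC : C = Submodule.span F (Set.range B))
    (hnd : rowSupport C = ⊤)
    (S : Submodule F (Matrix (Fin k) (Fin m) F))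
    (hS : S = Submodule.span F (Set.range (colSlices B))) :
    ∑ᶠ M ∈ (C : Set (Matrix (Fin m) (Fin n) F)) \ {0}, ((q : ℤ) ^ (n - M.rank) - 1)
      = ∑ᶠ X ∈ (S : Set (Matrix (Fin k) (Fin m) F)) \ {0}, ((q : ℤ) ^ (k - X.rank) - 1) := by
  classical
  subst hq hC hS
  have hB_inj : Function.Injective (combMap B) := combMap_injective_iff.2 hB
  have hX_inj : Function.Injective (combMap (colSlices B)) :=
    combMap_injective_iff.2 (linearIndependent_colSlices hnd)
  have hcount := sum_natCard_ker_sub_one_eq_sum_flip (evalPairing B)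
  simp only [natCard_ker_evalPairing, natCard_ker_flip_evalPairing,
    Nat.card_eq_fintype_card (α := F), Nat.cast_pow] at hcount
  rwa [← range_combMap, ← range_combMap, finsum_mem_linearMap_range_diff_zero hB_inj,
    finsum_mem_linearMap_range_diff_zero hX_inj]
end

section
/- (Singleton bound for matrix rank-metric codes.) Let K be a field and let C ⊆ K^{m×n} be a nonzero K-subspace of matrices with dim_K C = k, and let d := min{rank(M) : M ∈ C, M ≠ 0} be its minimum rank distance. Then k ≤ max{m,n}·(min{m,n} − d + 1). -/
open Matrix

/-!
A matrix vanishing on a rectangle `s × t` of positions has rank at most `|sᶜ| + |tᶜ|`. So if every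
nonzero matrix of `C` has rank exceeding `|sᶜ| + |tᶜ|`, a matrix of `C` is determined by its
entries on `s × t`, whence `dim C ≤ |s| * |t|`. The Singleton bound comes from deleting `d - 1`
rows if there are at most as many rows as columns, and `d - 1` columns otherwise.
-/

section Rank

variable {R ι κ : Type*} [CommSemiring R] [StrongRankCondition R]
  [Fintype ι] [DecidableEq ι] [Fintype κ] [DecidableEq κ]

theorem rank_le_card_compl_add_card_compl (M : Matrix ι κ R) (s : Finset ι) (t : Finset κ)
    (hM : ∀ i ∈ s, ∀ j ∈ t, M i j = 0) : M.rank ≤ sᶜ.card + tᶜ.card := by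
  classical
  let S : Finset (ι → R) := sᶜ.image (fun i => Pi.single i 1) ∪ tᶜ.image M.col
  have col_mem_span (j : κ) : M.col j ∈ Submodule.span R (S : Set (ι → R)) := by
    by_cases hj : j ∈ t
    · rw [pi_eq_sum_univ' (M.col j)]
      refine Submodule.sum_mem _ fun i _ => ?_
      by_cases hi : i ∈ s
      · simp [hM i hi j hj]
      · refine Submodule.smul_mem _ _ (Submodule.subset_span ?_)
        exact Finset.mem_union_left _ (Finset.mem_image_of_mem _ (Finset.mem_compl.mpr hi))
    · refine Submodule.subset_span ?_
      exact Finset.mem_union_right _ (Finset.mem_image_of_mem _ (Finset.mem_compl.mpr hj))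
  calc
    M.rank = Module.finrank R (Submodule.span R (Set.range M.col)) := M.rank_eq_finrank_span_cols
    _ ≤ Module.finrank R (Submodule.span R (S : Set (ι → R))) :=
      Submodule.finrank_mono (Submodule.span_le.mpr (Set.range_subset_iff.mpr col_mem_span))
    _ ≤ S.card := finrank_span_finset_le_card S
    _ ≤ sᶜ.card + tᶜ.card :=
      (Finset.card_union_le _ _).trans (add_le_add Finset.card_image_le Finset.card_image_le)

end Rank

/-- Passing to a submatrix, as a linear map; applied to a matrix code it is puncturing, the deletion
of rows and columns from all codewords. -/
def submatrixLinearMap {R ι κ ι' κ' : Type*} [Semiring R] (r : ι' → ι) (c : κ' → κ) :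
    Matrix ι κ R →ₗ[R] Matrix ι' κ' R where
  toFun M := M.submatrix r c
  map_add' _ _ := rfl
  map_smul' _ _ := rfl

section SingletonBound

variable {R ι κ : Type*} [CommRing R] [Nontrivial R]

theorem finrank_le_card_mul_card_of_eq_zero (C : Submodule R (Matrix ι κ R))
    (s : Finset ι) (t : Finset κ)
    (h : ∀ M ∈ C, (∀ i ∈ s, ∀ j ∈ t, M i j = 0) → M = 0) :
    Module.finrank R C ≤ s.card * t.card := by
  let π : Matrix ι κ R →ₗ[R] Matrix s t R := submatrixLinearMap Subtype.val Subtype.val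
  have π_injective : Function.Injective (π.domRestrict C) := by
    rw [LinearMap.injective_domRestrict_iff, LinearMap.disjoint_ker]
    exact fun M hM hπ => h M hM fun i hi j hj => congrFun₂ hπ ⟨i, hi⟩ ⟨j, hj⟩
  calc
    Module.finrank R C ≤ Module.finrank R (Matrix s t R) :=
      LinearMap.finrank_le_finrank_of_injective π_injective
    _ = s.card * t.card := by simp [Module.finrank_matrix]

variable [Fintype ι] [Fintype κ]

theorem finrank_le_sub_mul_sub_of_add_lt_rank (C : Submodule R (Matrix ι κ R)) {a b : ℕ}
    (h : ∀ M ∈ C, M ≠ 0 → a + b < M.rank) :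
    Module.finrank R C ≤ (Fintype.card ι - a) * (Fintype.card κ - b) := by
  classical
  obtain ⟨s, -, hs⟩ := Finset.exists_subset_card_eq
    (s := (Finset.univ : Finset ι)) (n := Fintype.card ι - a) (Nat.sub_le _ _)
  obtain ⟨t, -, ht⟩ := Finset.exists_subset_card_eq
    (s := (Finset.univ : Finset κ)) (n := Fintype.card κ - b) (Nat.sub_le _ _)
  rw [← hs, ← ht]
  refine finrank_le_card_mul_card_of_eq_zero C s t fun M hM hst => ?_
  by_contra hne
  have rank_gt := h M hM hne
  have rank_le := rank_le_card_compl_add_card_compl M s t hst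
  rw [Finset.card_compl, Finset.card_compl] at rank_le
  omega

theorem stmt4_general (C : Submodule R (Matrix ι κ R)) {d : ℕ}
    (hd : ∀ M ∈ C, M ≠ 0 → d ≤ M.rank) :
    Module.finrank R C ≤ max (Fintype.card ι) (Fintype.card κ) *
      (min (Fintype.card ι) (Fintype.card κ) - d + 1) := by
  obtain rfl | hpos := d.eq_zero_or_pos
  · calc
      Module.finrank R C ≤ Fintype.card ι * Fintype.card κ :=
        C.finrank_le.trans_eq (by simp [Module.finrank_matrix])
      _ = max (Fintype.card ι) (Fintype.card κ) * min (Fintype.card ι) (Fintype.card κ) :=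
        (max_mul_min _ _).symm
      _ ≤ _ := Nat.mul_le_mul_left _ (by omega)
  · obtain hle | hle := le_total (Fintype.card ι) (Fintype.card κ)
    · have delete_rows := finrank_le_sub_mul_sub_of_add_lt_rank C (a := d - 1) (b := 0)
        fun M hM hne => by have := hd M hM hne; omega
      rw [max_eq_right hle, min_eq_left hle, mul_comm]
      exact delete_rows.trans (Nat.mul_le_mul (by omega) (by omega))
    · have delete_columns := finrank_le_sub_mul_sub_of_add_lt_rank C (a := 0) (b := d - 1)
        fun M hM hne => by have := hd M hM hne; omega
      rw [max_eq_left hle, min_eq_right hle]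
      exact delete_columns.trans (Nat.mul_le_mul (by omega) (by omega))

end SingletonBound

/-- Singleton bound for matrix rank-metric codes:
`k ≤ max{m,n}·(min{m,n} − d + 1)` where `d` is the minimum rank of a nonzero codeword. -/
theorem stmt4 {K : Type*} [Field K] {m n k d : ℕ}
    (hm : 0 < m) (hn : 0 < n) (hk : 0 < k)
    (C : Submodule K (Matrix (Fin m) (Fin n) K))
    (hC : Module.finrank K C = k)
    (hd : IsLeast {r | ∃ M ∈ C, M ≠ 0 ∧ M.rank = r} d) :
    k ≤ max m n * (min m n - d + 1) := by
  subst hC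
  simpa only [Fintype.card_fin] using stmt4_general C fun M hM hne => hd.2 ⟨M, hM, hne, rfl⟩
end

section
/- Let K be a field and let C ⊆ K^{m×n} be a K-subspace with dim_K C = k. For every t ∈ {1,…,k}, the generalized rank weights satisfy d_t^r(C) ≤ n − ⌊(k−t)/m⌋ and d_t^c(C) ≤ m − ⌊(k−t)/n⌋. -/
open Matrix

/-!
Matrices with all rows in a subspace `U` of `K^n` form a subspace of dimension `m * dim U`, so it
meets `C` in dimension at least `k - m * (n - dim U)`. For `dim U = n - ⌊(k - t) / m⌋` this is at
least `t`, and any `t`-dimensional subspace of the intersection has row support inside `U`.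
Transposition exchanges the row and column weights.
-/

theorem exists_submodule_le_finrank_eq {R M : Type*} [Ring R] [StrongRankCondition R]
    [AddCommGroup M] [Module R M] {S : Submodule R M} {t : ℕ} (ht : t ≤ Module.finrank R S) :
    ∃ D ≤ S, Module.finrank R D = t := by
  have : Nontrivial R := nontrivial_of_invariantBasisNumber R
  obtain ⟨v, hv⟩ := exists_linearIndependent_of_le_finrank ht
  have hspan : Module.finrank R (Submodule.span R (Set.range v)) = t := by
    rw [finrank_span_eq_card hv, Fintype.card_fin]
  exact ⟨(Submodule.span R (Set.range v)).map S.subtype, Submodule.map_subtype_le S _,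
    (Submodule.finrank_map_subtype_eq S _).trans hspan⟩

theorem finrank_add_finrank_le_finrank_add_finrank_inf {K V : Type*} [DivisionRing K]
    [AddCommGroup V] [Module K V] [FiniteDimensional K V] (S T : Submodule K V) :
    Module.finrank K S + Module.finrank K T ≤
      Module.finrank K V + Module.finrank K (S ⊓ T : Submodule K V) := by
  rw [← Submodule.finrank_sup_add_finrank_inf_eq]
  exact Nat.add_le_add_right (Submodule.finrank_le _) _

section RowWeights

variable {K : Type*} [Field K] {a b t : ℕ}

theorem rowSpace_le_iff {M : Matrix (Fin a) (Fin b) K} {U : Submodule K (Fin b → K)} :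
    rowSpace M ≤ U ↔ ∀ i, M i ∈ U :=
  Submodule.span_le.trans Set.range_subset_iff

theorem Sr_le (C : Submodule K (Matrix (Fin a) (Fin b) K)) (U : Submodule K (Fin b → K)) :
    Sr C U ≤ C :=
  fun _ hM => hM.1

theorem Sr_eq_inf (C : Submodule K (Matrix (Fin a) (Fin b) K)) (U : Submodule K (Fin b → K)) :
    Sr C U = C ⊓ Sr ⊤ U := by
  ext M
  exact and_congr_right fun _ => (and_iff_right trivial).symm

theorem rowSupport_le_of_le_Sr {C D : Submodule K (Matrix (Fin a) (Fin b) K)}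
    {U : Submodule K (Fin b → K)} (hD : D ≤ Sr C U) : rowSupport D ≤ U :=
  iSup₂_le fun _ hM => (hD hM).2

theorem finrank_Sr_top (U : Submodule K (Fin b → K)) :
    Module.finrank K (Sr (a := a) ⊤ U) = a * Module.finrank K U := by
  let e : Sr (a := a) ⊤ U ≃ₗ[K] (Fin a → U) :=
    { toFun := fun M i => ⟨M.1 i, rowSpace_le_iff.1 M.2.2 i⟩
      invFun := fun v => ⟨Matrix.of fun i => (v i : Fin b → K),
        Submodule.mem_top, rowSpace_le_iff.2 fun i => (v i).2⟩
      map_add' := fun _ _ => rfl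
      map_smul' := fun _ _ => rfl }
  rw [e.finrank_eq, Module.finrank_pi_fintype, Finset.sum_const, Finset.card_fin, smul_eq_mul]

theorem finrank_add_mul_finrank_le_mul_add_finrank_Sr
    (C : Submodule K (Matrix (Fin a) (Fin b) K)) (U : Submodule K (Fin b → K)) :
    Module.finrank K C + a * Module.finrank K U ≤ a * b + Module.finrank K (Sr C U) := by
  have hinf := finrank_add_finrank_le_finrank_add_finrank_inf C (Sr ⊤ U)
  rwa [← Sr_eq_inf, finrank_Sr_top, Module.finrank_matrix, Module.finrank_self, mul_one,
    Fintype.card_fin, Fintype.card_fin] at hinf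

theorem dRow_le_finrank_of_le_finrank_Sr {C : Submodule K (Matrix (Fin a) (Fin b) K)}
    {U : Submodule K (Fin b → K)} (ht : t ≤ Module.finrank K (Sr C U)) :
    dRow C t ≤ Module.finrank K U := by
  obtain ⟨D, hD, hDt⟩ := exists_submodule_le_finrank_eq ht
  calc
    dRow C t ≤ Module.finrank K (rowSupport D) :=
      Nat.sInf_le ⟨D, hD.trans (Sr_le C U), hDt, rfl⟩
    _ ≤ Module.finrank K U := Submodule.finrank_mono (rowSupport_le_of_le_Sr hD)

theorem dRow_le_sub_div {C : Submodule K (Matrix (Fin a) (Fin b) K)}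
    (ht : t ≤ Module.finrank K C) : dRow C t ≤ b - (Module.finrank K C - t) / a := by
  set s := (Module.finrank K C - t) / a
  have hmul : a * s ≤ Module.finrank K C - t := Nat.mul_div_le _ a
  obtain ⟨U, -, hU⟩ : ∃ U ≤ (⊤ : Submodule K (Fin b → K)), Module.finrank K U = b - s :=
    exists_submodule_le_finrank_eq <| by
      rw [finrank_top, Module.finrank_fin_fun]
      exact Nat.sub_le b s
  rw [← hU]
  apply dRow_le_finrank_of_le_finrank_Sr
  have hdim := finrank_add_mul_finrank_le_mul_add_finrank_Sr C U
  rw [hU, Nat.mul_sub] at hdim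
  omega

end RowWeights

section ColumnWeights

variable {K : Type*} [Field K] {a b : ℕ}

theorem rowSupport_map_transpose (D : Submodule K (Matrix (Fin a) (Fin b) K)) :
    rowSupport (D.map (transposeLinearEquiv (Fin a) (Fin b) K K).toLinearMap) = colSupport D :=
  iSup_image (f := transpose) (g := rowSpace)

theorem dRow_map_transpose (C : Submodule K (Matrix (Fin a) (Fin b) K)) (t : ℕ) :
    dRow (C.map (transposeLinearEquiv (Fin a) (Fin b) K K).toLinearMap) t = dCol C t := by
  let T := transposeLinearEquiv (Fin a) (Fin b) K K
  refine congrArg sInf (Set.ext fun r => ?_)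
  refine ((Submodule.orderIsoMapComap T).toEquiv.exists_congr fun D => ?_).symm
  have hD : (Submodule.orderIsoMapComap T).toEquiv D = D.map T.toLinearMap := rfl
  rw [hD, Submodule.map_le_map_iff_of_injective T.injective, T.finrank_map_eq,
    rowSupport_map_transpose]

theorem dCol_le_sub_div {t : ℕ} {C : Submodule K (Matrix (Fin a) (Fin b) K)}
    (ht : t ≤ Module.finrank K C) : dCol C t ≤ a - (Module.finrank K C - t) / b := by
  have hfin := (transposeLinearEquiv (Fin a) (Fin b) K K).finrank_map_eq C
  rw [← dRow_map_transpose, ← hfin]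
  exact dRow_le_sub_div (ht.trans_eq hfin.symm)

end ColumnWeights

/-- Bounds on the generalized rank weights:
`d_t^r(C) ≤ n − ⌊(k−t)/m⌋` and `d_t^c(C) ≤ m − ⌊(k−t)/n⌋`. -/
theorem stmt7 {K : Type*} [Field K] {m n k : ℕ}
    (hm : 0 < m) (hn : 0 < n) (hk : 0 < k)
    (C : Submodule K (Matrix (Fin m) (Fin n) K))
    (hC : Module.finrank K C = k)
    (t : ℕ) (ht1 : 1 ≤ t) (htk : t ≤ k) :
    dRow C t ≤ n - (k - t) / m ∧ dCol C t ≤ m - (k - t) / n := by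
  subst hC
  exact ⟨dRow_le_sub_div htk, dCol_le_sub_div htk⟩
end

section
/- Let F be a finite field with q elements and let C ⊆ F^{m×n} be any F-subspace with dim_F C = k. Then, as integers, q^m · Σ_{M ∈ C, M ≠ 0} (q^{n−rank(M)} − 1) ≥ (q^k − q^m)(q^n − 1) and q^n · Σ_{M ∈ C, M ≠ 0} (q^{m−rank(M)} − 1) ≥ (q^k − q^n)(q^m − 1). -/
open Matrix

/-!
For a bilinear map `φ : V × W → U` of finite modules, `∑_{x ≠ 0} (|ker φ(x, ·)| - 1)` counts the
pairs of nonzero vectors annihilated by `φ`, and so equals `∑_{w ≠ 0} (|ker φ(·, w)| - 1)`. Each of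
the `|W| - 1` summands of the latter is bounded below using `|V| ≤ |U| |ker φ(·, w)|`. For
`φ(M, v) = M v` the kernel of `φ(M, ·)` has `q ^ (n - rank M)` elements, which gives the first
inequality; the second one is the first for the transposed matrices.
-/

theorem finsum_mem_sdiff_zero {S M A : Type*} [Zero M] [SetLike S M] [ZeroMemClass S M]
    [AddCommMonoid A] (s : S) [Fintype s] [DecidableEq s] (f : M → A) :
    ∑ᶠ x ∈ (s : Set M) \ {0}, f x = ∑ x ∈ ({0}ᶜ : Finset s), f x := by
  have himage : (s : Set M) \ {0} = Subtype.val '' (({0}ᶜ : Finset s) : Set s) := by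
    ext x
    simp [← ZeroMemClass.coe_eq_zero, and_comm]
  rw [himage, finsum_mem_image Subtype.val_injective.injOn, finsum_mem_coe_finset]

section Bilinear

open Finset

theorem card_le_card_mul_card_ker {R V U : Type*} [Ring R] [AddCommGroup V] [Module R V]
    [AddCommGroup U] [Module R U] [Finite U] (f : V →ₗ[R] U) :
    Nat.card V ≤ Nat.card U * Nat.card (LinearMap.ker f) :=
  calc Nat.card V = Nat.card (LinearMap.ker f) * Nat.card (V ⧸ LinearMap.ker f) :=
        Submodule.card_eq_card_quotient_mul_card _
    _ = Nat.card (LinearMap.range f) * Nat.card (LinearMap.ker f) := by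
        rw [Nat.card_congr f.quotKerEquivRange.toEquiv, mul_comm]
    _ ≤ Nat.card U * Nat.card (LinearMap.ker f) := by
        gcongr
        exact Finite.card_subtype_le _

theorem card_ker_sub_one_eq_card_filter {R W U : Type*} [Semiring R] [AddCommMonoid W]
    [Module R W] [Fintype W] [DecidableEq W] [AddCommMonoid U] [Module R U] [DecidableEq U]
    (f : W →ₗ[R] U) :
    (Nat.card (LinearMap.ker f) : ℤ) - 1 = #{w ∈ ({0}ᶜ : Finset W) | f w = 0} := by
  have hker : Nat.card (LinearMap.ker f) = #{w | f w = 0} := by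
    simp [← Fintype.card_subtype, ← Nat.card_eq_fintype_card, LinearMap.mem_ker]
  have herase : ({w ∈ ({0}ᶜ : Finset W) | f w = 0} : Finset W) =
      ({w | f w = 0} : Finset W).erase 0 := by
    ext w
    simp
  rw [hker, herase, cast_card_erase_of_mem (by simp)]

theorem sum_card_ker_sub_one_eq_sum_flip {R V W U : Type*} [CommSemiring R]
    [AddCommMonoid V] [Module R V] [Fintype V] [DecidableEq V]
    [AddCommMonoid W] [Module R W] [Fintype W] [DecidableEq W]
    [AddCommMonoid U] [Module R U] (φ : V →ₗ[R] W →ₗ[R] U) :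
    ∑ x ∈ {0}ᶜ, ((Nat.card (LinearMap.ker (φ x)) : ℤ) - 1) =
      ∑ w ∈ {0}ᶜ, ((Nat.card (LinearMap.ker (φ.flip w)) : ℤ) - 1) := by
  classical
  simp only [card_ker_sub_one_eq_card_filter, LinearMap.flip_apply]
  exact_mod_cast sum_card_bipartiteAbove_eq_sum_card_bipartiteBelow fun x w => φ x w = 0

theorem card_sub_card_mul_le_sum_card_ker {R V W U : Type*} [CommRing R]
    [AddCommGroup V] [Module R V] [Fintype V] [DecidableEq V]
    [AddCommGroup W] [Module R W] [Finite W]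
    [AddCommGroup U] [Module R U] [Finite U] (φ : V →ₗ[R] W →ₗ[R] U) :
    ((Nat.card V : ℤ) - Nat.card U) * (Nat.card W - 1) ≤
      Nat.card U * ∑ x ∈ {0}ᶜ, ((Nat.card (LinearMap.ker (φ x)) : ℤ) - 1) := by
  classical
  have := Fintype.ofFinite W
  have hker (w : W) : (Nat.card V : ℤ) - Nat.card U ≤
      Nat.card U * ((Nat.card (LinearMap.ker (φ.flip w)) : ℤ) - 1) := by
    have h : (Nat.card V : ℤ) ≤ Nat.card U * Nat.card (LinearMap.ker (φ.flip w)) := by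
      exact_mod_cast card_le_card_mul_card_ker (φ.flip w)
    linarith
  have hcard : (#({0}ᶜ : Finset W) : ℤ) = Nat.card W - 1 := by
    rw [compl_singleton, cast_card_erase_of_mem (mem_univ 0), card_univ, Nat.card_eq_fintype_card]
  calc ((Nat.card V : ℤ) - Nat.card U) * (Nat.card W - 1)
      = ∑ _w ∈ ({0}ᶜ : Finset W), ((Nat.card V : ℤ) - Nat.card U) := by
        rw [sum_const, nsmul_eq_mul, hcard, mul_comm]
    _ ≤ ∑ w ∈ {0}ᶜ, (Nat.card U : ℤ) * ((Nat.card (LinearMap.ker (φ.flip w)) : ℤ) - 1) :=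
        sum_le_sum fun w _ => hker w
    _ = Nat.card U * ∑ x ∈ {0}ᶜ, ((Nat.card (LinearMap.ker (φ x)) : ℤ) - 1) := by
        rw [← mul_sum, sum_card_ker_sub_one_eq_sum_flip φ]

end Bilinear

section Matrix

variable {F ι κ : Type*} [Field F] [Fintype F] [Fintype κ]

theorem card_ker_mulVecLin (M : Matrix ι κ F) :
    Nat.card (LinearMap.ker M.mulVecLin) = Fintype.card F ^ (Fintype.card κ - M.rank) := by
  have hrank : M.rank + Module.finrank F (LinearMap.ker M.mulVecLin) = Fintype.card κ := by
    rw [Matrix.rank, M.mulVecLin.finrank_range_add_finrank_ker, Module.finrank_fintype_fun_eq_card]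
  rw [Module.natCard_eq_pow_finrank (K := F), Nat.card_eq_fintype_card, ← hrank,
    Nat.add_sub_cancel_left]

theorem pow_finrank_sub_pow_mul_le_sum_pow_sub_rank [Fintype ι] {V : Type*} [AddCommGroup V]
    [Module F V] [Fintype V] [DecidableEq V] (φ : V →ₗ[F] Matrix ι κ F) :
    ((Fintype.card F : ℤ) ^ Module.finrank F V - (Fintype.card F : ℤ) ^ Fintype.card ι) *
        ((Fintype.card F : ℤ) ^ Fintype.card κ - 1) ≤
      (Fintype.card F : ℤ) ^ Fintype.card ι *
        ∑ x ∈ {0}ᶜ, ((Fintype.card F : ℤ) ^ (Fintype.card κ - (φ x).rank) - 1) := by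
  have h := card_sub_card_mul_le_sum_card_ker (Matrix.mulVecBilin F F ∘ₗ φ)
  have hker (x : V) : Nat.card (LinearMap.ker ((Matrix.mulVecBilin F F ∘ₗ φ) x)) =
      Fintype.card F ^ (Fintype.card κ - (φ x).rank) := card_ker_mulVecLin (φ x)
  simp only [hker, Module.natCard_eq_pow_finrank (K := F) (V := V), Nat.card_fun,
    Nat.card_eq_fintype_card] at h
  exact_mod_cast h

end Matrix

theorem stmt9_general {F ι κ V : Type*} [Field F] [Fintype F] [Fintype ι] [Fintype κ]
    [AddCommGroup V] [Module F V] [Fintype V] [DecidableEq V] (q : ℕ) (hq : q = Fintype.card F)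
    (φ : V →ₗ[F] Matrix ι κ F) :
    (q : ℤ) ^ Fintype.card ι * ∑ x ∈ {0}ᶜ, ((q : ℤ) ^ (Fintype.card κ - (φ x).rank) - 1)
      ≥ ((q : ℤ) ^ Module.finrank F V - (q : ℤ) ^ Fintype.card ι) *
        ((q : ℤ) ^ Fintype.card κ - 1) ∧
    (q : ℤ) ^ Fintype.card κ * ∑ x ∈ {0}ᶜ, ((q : ℤ) ^ (Fintype.card ι - (φ x).rank) - 1)
      ≥ ((q : ℤ) ^ Module.finrank F V - (q : ℤ) ^ Fintype.card κ) *
        ((q : ℤ) ^ Fintype.card ι - 1) := by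
  subst hq
  refine ⟨pow_finrank_sub_pow_mul_le_sum_pow_sub_rank φ, ?_⟩
  simpa using pow_finrank_sub_pow_mul_le_sum_pow_sub_rank
    ((Matrix.transposeLinearEquiv ι κ F F).toLinearMap ∘ₗ φ)

/-- For any `[m×n,k]_q` code `C`,
`q^m · Σ_{M ∈ C, M≠0} (q^{n−rk(M)} − 1) ≥ (q^k − q^m)(q^n − 1)` and
`q^n · Σ_{M ∈ C, M≠0} (q^{m−rk(M)} − 1) ≥ (q^k − q^n)(q^m − 1)`, as integers. -/
theorem stmt9 {F : Type*} [Field F] [Fintype F] {m n k : ℕ}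
    (hm : 0 < m) (hn : 0 < n) (hk : 0 < k)
    (q : ℕ) (hq : q = Fintype.card F)
    (C : Submodule F (Matrix (Fin m) (Fin n) F))
    (hC : Module.finrank F C = k) :
    (q : ℤ) ^ m * ∑ᶠ M ∈ (C : Set (Matrix (Fin m) (Fin n) F)) \ {0},
        ((q : ℤ) ^ (n - M.rank) - 1)
      ≥ ((q : ℤ) ^ k - (q : ℤ) ^ m) * ((q : ℤ) ^ n - 1) ∧
    (q : ℤ) ^ n * ∑ᶠ M ∈ (C : Set (Matrix (Fin m) (Fin n) F)) \ {0},
        ((q : ℤ) ^ (m - M.rank) - 1)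
      ≥ ((q : ℤ) ^ k - (q : ℤ) ^ n) * ((q : ℤ) ^ m - 1) := by
  classical
  subst hC
  have : Fintype C := Fintype.ofFinite C
  rw [finsum_mem_sdiff_zero, finsum_mem_sdiff_zero]
  simpa only [Fintype.card_fin, Submodule.subtype_apply] using stmt9_general q hq C.subtype
end
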